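/- In Q the elements e0 = (1 + K²)/2 and e1 = (1 − K²)/2 are central orthogonal idempotents with e0 + e1 = 1. Setting f⁺ = −i·F and f⁻ = E·K^{-1}, one has f⁺·f⁻ + f⁻·f⁺ = e1 and Δ(f^±) = f^± ⊗ 1 + K^{-1} ⊗ f^±. Moreover the two-sided ideal Q₁ = e1·Q is an 8-dimensional semisimple ℂ-algebra isomorphic to M₂(ℂ) × M₂(ℂ) (a direct sum of two Clifford algebras), while the two-sided ideal Q₀ = e0·Q is an 8-dimensional non-semisimple ℂ-algebra, and Q = Q₀ ⊕ Q₁ as algebras. -/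

import Mathlib

open TensorProduct

set_option maxHeartbeats 1000000
set_option synthInstance.maxHeartbeats 400000

noncomputable section

/-- Generators of the restricted quantum group `Q = \bar U_i sl(2)`. -/
inductive QGen : Type
  | E | F | K | Kinv
deriving DecidableEq

/-- The free algebra on the generators. -/
abbrev FA : Type := FreeAlgebra ℂ QGen

def ιE : FA := FreeAlgebra.ι ℂ QGen.E
def ιF : FA := FreeAlgebra.ι ℂ QGen.F
def ιK : FA := FreeAlgebra.ι ℂ QGen.K
def ιKi : FA := FreeAlgebra.ι ℂ QGen.Kinv

/-- Defining relations of `\bar U_i sl(2)` (at `q = i`, i.e. `p = 2`). -/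
inductive QRel : FA → FA → Prop
  | KKi : QRel (ιK * ιKi) 1
  | KiK : QRel (ιKi * ιK) 1
  | KEKi : QRel (ιK * ιE * ιKi) (-ιE)
  | KFKi : QRel (ιK * ιF * ιKi) (-ιF)
  | EF : QRel (ιE * ιF - ιF * ιE) ((2 * Complex.I)⁻¹ • (ιK - ιKi))
  | Esq : QRel (ιE ^ 2) 0
  | Fsq : QRel (ιF ^ 2) 0
  | K4 : QRel (ιK ^ 4) 1

/-- The restricted quantum group `\bar U_i sl(2)`: the quotient of the free algebra
by the two-sided ideal generated by the defining relations. -/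
abbrev Q : Type := RingQuot QRel

def gE : Q := RingQuot.mkAlgHom ℂ QRel ιE
def gF : Q := RingQuot.mkAlgHom ℂ QRel ιF
def gK : Q := RingQuot.mkAlgHom ℂ QRel ιK
def gKi : Q := RingQuot.mkAlgHom ℂ QRel ιKi

section Gadgets

variable (k : Type) [Field k] (A : Type) [Ring A] [Algebra k A]

abbrev TP2 : Type := A ⊗[k] A
abbrev TP3 : Type := A ⊗[k] (A ⊗[k] A)
abbrev TP4 : Type := A ⊗[k] (A ⊗[k] (A ⊗[k] A))

/-- Multiplication `a ⊗ b ↦ a * b`. -/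
def mulA : TP2 k A →ₗ[k] A := LinearMap.mul' k A

/-- Tensor flip `a ⊗ b ↦ b ⊗ a`. -/
def flipA : TP2 k A →ₗ[k] TP2 k A := (TensorProduct.comm k A A).toLinearMap

/-- `a ↦ a ⊗ 1`. -/
def lTen : A →ₗ[k] TP2 k A := (TensorProduct.mk k A A).flip 1

/-- `a ↦ 1 ⊗ a`. -/
def rTen : A →ₗ[k] TP2 k A := TensorProduct.mk k A A 1

/-- `a ⊗ b ↦ a ⊗ b ⊗ 1`. -/
def emb12 : TP2 k A →ₗ[k] TP3 k A := TensorProduct.map LinearMap.id (lTen k A)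

/-- `a ⊗ b ↦ a ⊗ 1 ⊗ b`. -/
def emb13 : TP2 k A →ₗ[k] TP3 k A := TensorProduct.map LinearMap.id (rTen k A)

/-- `a ⊗ b ↦ 1 ⊗ a ⊗ b`. -/
def emb23 : TP2 k A →ₗ[k] TP3 k A := TensorProduct.mk k A (TP2 k A) 1

/-- `a ⊗ b ⊗ c ↦ a ⊗ c ⊗ b`. -/
def perm132 : TP3 k A →ₗ[k] TP3 k A := TensorProduct.map LinearMap.id (flipA k A)

/-- `a ⊗ b ⊗ c ↦ b ⊗ c ⊗ a`. -/
def perm231 : TP3 k A →ₗ[k] TP3 k A :=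
  (TensorProduct.assoc k A A A).toLinearMap ∘ₗ (TensorProduct.comm k A (TP2 k A)).toLinearMap

/-- `a ⊗ b ⊗ c ↦ c ⊗ a ⊗ b`. -/
def perm312 : TP3 k A →ₗ[k] TP3 k A :=
  (TensorProduct.comm k (TP2 k A) A).toLinearMap ∘ₗ (TensorProduct.assoc k A A A).symm.toLinearMap

/-- `a ⊗ b ⊗ c ↦ b ⊗ a ⊗ c`. -/
def perm213 : TP3 k A →ₗ[k] TP3 k A :=
  (TensorProduct.assoc k A A A).toLinearMap ∘ₗ
    (TensorProduct.map (flipA k A) LinearMap.id) ∘ₗ (TensorProduct.assoc k A A A).symm.toLinearMap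

variable {k A}

/-- `(Δ ⊗ id)` on two tensor factors, landing in the triple tensor product. -/
def copL (D : A →ₐ[k] TP2 k A) : TP2 k A →ₗ[k] TP3 k A :=
  (TensorProduct.assoc k A A A).toLinearMap ∘ₗ TensorProduct.map D.toLinearMap LinearMap.id

/-- `(id ⊗ Δ)` on two tensor factors. -/
def copR (D : A →ₐ[k] TP2 k A) : TP2 k A →ₗ[k] TP3 k A :=
  TensorProduct.map LinearMap.id D.toLinearMap

/-- `(ε ⊗ id) : A ⊗ A → A`. -/
def cuL (ce : A →ₐ[k] k) : TP2 k A →ₗ[k] A :=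
  (TensorProduct.lid k A).toLinearMap ∘ₗ TensorProduct.map ce.toLinearMap LinearMap.id

/-- `(id ⊗ ε) : A ⊗ A → A`. -/
def cuR (ce : A →ₐ[k] k) : TP2 k A →ₗ[k] A :=
  (TensorProduct.rid k A).toLinearMap ∘ₗ TensorProduct.map LinearMap.id ce.toLinearMap

/-- `(id ⊗ ε ⊗ id) : A ⊗ A ⊗ A → A ⊗ A`. -/
def cuMid (ce : A →ₐ[k] k) : TP3 k A →ₗ[k] TP2 k A :=
  TensorProduct.map LinearMap.id (cuL ce)

/-- `(Δ ⊗ id ⊗ id)`. -/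
def cop4_1 (D : A →ₐ[k] TP2 k A) : TP3 k A →ₗ[k] TP4 k A :=
  (TensorProduct.assoc k A A (TP2 k A)).toLinearMap ∘ₗ TensorProduct.map D.toLinearMap LinearMap.id

/-- `(id ⊗ Δ ⊗ id)`. -/
def cop4_2 (D : A →ₐ[k] TP2 k A) : TP3 k A →ₗ[k] TP4 k A :=
  TensorProduct.map LinearMap.id (copL D)

/-- `(id ⊗ id ⊗ Δ)`. -/
def cop4_3 (D : A →ₐ[k] TP2 k A) : TP3 k A →ₗ[k] TP4 k A :=
  TensorProduct.map LinearMap.id (copR D)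

/-- `a ⊗ b ⊗ c ↦ a ⊗ b ⊗ c ⊗ 1`, i.e. `Φ ↦ Φ ⊗ 1`. -/
def pad4 : TP3 k A →ₗ[k] TP4 k A :=
  TensorProduct.map LinearMap.id (TensorProduct.map LinearMap.id (lTen k A))

/-- `a ⊗ b ⊗ c ↦ f(a) * g(b) * h(c)`. -/
def tmap3 (f g h : A →ₗ[k] A) : TP3 k A →ₗ[k] A :=
  mulA k A ∘ₗ TensorProduct.map f (mulA k A ∘ₗ TensorProduct.map g h)

/-- `a ⊗ b ↦ S(a) * b`, used in the antipode axiom `m ∘ (S ⊗ id) ∘ Δ = 1·ε`. -/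
def antipL (s : A →ₗ[k] A) : TP2 k A →ₗ[k] A := mulA k A ∘ₗ TensorProduct.map s LinearMap.id

/-- `a ⊗ b ↦ a * S(b)`. -/
def antipR (s : A →ₗ[k] A) : TP2 k A →ₗ[k] A := mulA k A ∘ₗ TensorProduct.map LinearMap.id s

end Gadgets

/-- Central idempotent `e₀ = (1 + K²)/2`. -/
def e0 : Q := (2:ℂ)⁻¹ • (1 + gK ^ 2)

/-- Central idempotent `e₁ = (1 − K²)/2`. -/
def e1 : Q := (2:ℂ)⁻¹ • (1 - gK ^ 2)

/-- `f⁺ = −i F`. -/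
def fp : Q := (-Complex.I) • gF

/-- `f⁻ = E K⁻¹`. -/
def fm : Q := gE * gKi

/-- The Casimir element `C = FE − (i/4)(K − K⁻¹)`. -/
def Cas : Q := gF * gE - (Complex.I / 4) • (gK - gKi)

def t2 (a b : Q) : TP2 ℂ Q := a ⊗ₜ[ℂ] b

def t3 (a b c : Q) : TP3 ℂ Q := a ⊗ₜ[ℂ] (b ⊗ₜ[ℂ] c)

def eEF : Q := gE * gF
def eEK : Q := gE * gK
def eFK : Q := gF * gK
def eEFK : Q := gE * gF * gK

/-- `Φ^{010}` component of the coassociator. -/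
def Phi010 : TP3 ℂ Q :=
  t3 1 1 1 - (1 + Complex.I) • t3 gE gK gF + (1 - Complex.I) • t3 eFK gK eEK
    + (2:ℂ) • t3 eEFK 1 eEFK

/-- `Φ^{101}` component of the coassociator. -/
def Phi101 : TP3 ℂ Q :=
  (Complex.I - 1) • t3 1 gF eEK + t3 1 gK 1 + (2:ℂ) • t3 1 eEF eEFK
    - (1 + Complex.I) • t3 1 eEK gF - (1 + Complex.I) • t3 gE eFK 1
    + (2 * Complex.I) • t3 gE eEFK gF + (1 - Complex.I) • t3 eFK gE 1
    - (2 * Complex.I) • t3 eFK eEFK eEK - (2:ℂ) • t3 eEFK eEF 1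

/-- `Φ^{111}` component of the coassociator. -/
def Phi111 (β : ℂ) : TP3 ℂ Q :=
  (Complex.I * β ^ 2) • (
    (1 + Complex.I) • t3 1 gF eEK - t3 1 gK 1 - (2:ℂ) • t3 1 eEF 1
      - (2 * Complex.I) • t3 1 eEF eEFK + (1 + Complex.I) • t3 1 eEK gF
      - (1 + Complex.I) • t3 gE 1 gF + (1 + Complex.I) • t3 gE eFK 1
      + (2 * Complex.I) • t3 gE eFK eEFK + (2:ℂ) • t3 gE eEFK gF
      - (1 + Complex.I) • t3 eFK 1 eEK + (1 + Complex.I) • t3 eFK gE 1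
      + (2 * Complex.I) • t3 eFK gE eEFK + (2:ℂ) • t3 eFK eEFK eEK
      + (2 * Complex.I) • t3 eEFK gF eEK + (2 * Complex.I) • t3 eEFK gK eEFK
      - (2 * Complex.I) • t3 eEFK eEF 1 + (2 * Complex.I) • t3 eEFK eEK gF
      + (4:ℂ) • t3 eEFK eEF eEFK)

/-- The coassociator `Φ` of the quasi-Hopf algebra structure on `Q`. -/
def Phi (β : ℂ) : TP3 ℂ Q :=
  t3 e0 e0 e0 + t3 e1 e0 e0 + Phi010 * t3 e0 e1 e0 + t3 e0 e0 e1
    + t3 e1 e1 e0 + Phi101 * t3 e1 e0 e1 + t3 e0 e1 e1 + Phi111 β * t3 e1 e1 e1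

def R00 : TP2 ℂ Q :=
  (2:ℂ)⁻¹ • ((t2 1 1 + t2 1 gK + t2 gK 1 - t2 gK gK) * (t2 1 1 + (2 * Complex.I) • t2 gE gF))

def R01 : TP2 ℂ Q :=
  (2:ℂ)⁻¹ • ((t2 1 1 - Complex.I • t2 1 gK + t2 gK 1 + Complex.I • t2 gK gK) *
    (t2 1 1 + (1 - Complex.I) • t2 eFK eEK - (1 - Complex.I) • t2 gE gF
      + (1 + Complex.I) • t2 eEFK 1 + (2 * Complex.I) • t2 eEFK eEFK))

def R10 : TP2 ℂ Q :=
  (2:ℂ)⁻¹ • ((t2 1 1 + t2 1 gK - Complex.I • t2 gK 1 + Complex.I • t2 gK gK) *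
    (t2 1 gK + (1 - Complex.I) • t2 eFK gE + (1 - Complex.I) • t2 gE eFK
      - (1 - Complex.I) • t2 1 eEF - (2 * Complex.I) • t2 eEFK eEF))

def R11 (β : ℂ) : TP2 ℂ Q :=
  (β / 2) • ((t2 1 1 - Complex.I • t2 1 gK - Complex.I • t2 gK 1 + t2 gK gK) *
    ((-Complex.I) • t2 gK 1 + (2 * Complex.I) • t2 eEK gF + (1 - Complex.I) • t2 gK eEFK
      - (1 + Complex.I) • t2 eEF 1 - (2 * Complex.I) • t2 eEF eEFK))

/-- The universal R-matrix `R` of the quasi-triangular quasi-Hopf structure on `Q`. -/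
def Rmat (β : ℂ) : TP2 ℂ Q :=
  R00 * t2 e0 e0 + R01 * t2 e0 e1 + R10 * t2 e1 e0 + R11 β * t2 e1 e1

/-- The standard R-matrix `R_st` of the quotient `Q/(K²-1)`. -/
def Rst : TP2 ℂ Q :=
  (2:ℂ)⁻¹ • ∑ m ∈ Finset.range 2, ∑ n ∈ Finset.range 2,
    ((-1:ℂ) ^ (m * n)) • (t2 (gK ^ m) (gK ^ n) * (t2 1 1 + (2 * Complex.I) • t2 gE gF))

/-- The monodromy matrix `M = R₂₁ · R`. -/
def Mmat (β : ℂ) : TP2 ℂ Q := flipA ℂ Q (Rmat β) * Rmat β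

/-- The ribbon element `v = (e₀ − iβ K e₁)(1 − 2 f⁺ f⁻)`. -/
def vRib (β : ℂ) : Q := (e0 - (Complex.I * β) • (gK * e1)) * (1 - (2:ℂ) • (fp * fm))

/-- The coevaluation element `β = e₀ − 2iβ² C e₁`. -/
def bbEl (β : ℂ) : Q := e0 - (2 * Complex.I * β ^ 2) • (Cas * e1)

/-- `b ⊗ c ↦ S(b · bb · S(c))`, inner part of the Drinfeld element. -/
def uInner (S : Q →ₗ[ℂ] Q) (bb : Q) : TP2 ℂ Q →ₗ[ℂ] Q :=
  S ∘ₗ mulA ℂ Q ∘ₗ TensorProduct.map (LinearMap.mulRight ℂ bb) S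

/-- `Φ' ⊗ Φ'' ⊗ Φ''' ↦ S(Φ'' · bb · S(Φ''')) ⊗ Φ'`. -/
def uMap1 (S : Q →ₗ[ℂ] Q) (bb : Q) : TP3 ℂ Q →ₗ[ℂ] TP2 ℂ Q :=
  TensorProduct.map (uInner S bb) LinearMap.id ∘ₗ (TensorProduct.comm ℂ Q (TP2 ℂ Q)).toLinearMap

/-- `R' ⊗ R'' ↦ S(R'') · al · R'`. -/
def uMap2 (S : Q →ₗ[ℂ] Q) (al : Q) : TP2 ℂ Q →ₗ[ℂ] Q :=
  mulA ℂ Q ∘ₗ TensorProduct.map (LinearMap.mulRight ℂ al ∘ₗ S) LinearMap.id ∘ₗ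
    (TensorProduct.comm ℂ Q Q).toLinearMap

/-- `(x ⊗ a) ⊗ (R' ⊗ R'') ↦ x · (S(R'') · al · R') · a`. -/
def uBig (S : Q →ₗ[ℂ] Q) (al : Q) : TP2 ℂ Q ⊗[ℂ] TP2 ℂ Q →ₗ[ℂ] Q :=
  mulA ℂ Q ∘ₗ TensorProduct.map LinearMap.id (mulA ℂ Q ∘ₗ (TensorProduct.comm ℂ Q Q).toLinearMap)
    ∘ₗ (TensorProduct.assoc ℂ Q Q Q).toLinearMap ∘ₗ TensorProduct.map LinearMap.id (uMap2 S al)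

/-- The Drinfeld element `u = Σ S(Φ''·b·S(Φ'''))·S(R'')·α·R'·Φ'` (with `α = 1`). -/
def uDrin (β : ℂ) (S : Q →ₗ[ℂ] Q) : Q :=
  uBig S 1 (uMap1 S (bbEl β) (Phi β) ⊗ₜ[ℂ] Rmat β)

/-- The balancing element `g = b · S(α) · v⁻¹ · u` (with `α = 1`). -/
def balG (β : ℂ) (S : Q →ₗ[ℂ] Q) : Q :=
  bbEl β * S 1 * Ring.inverse (vRib β) * uDrin β S

/-- The cointegral `c = (β²/i)·E·F·(1 + K + K² + K³)`. -/
def cInt (β : ℂ) : Q := (β ^ 2 / Complex.I) • (gE * gF * (1 + gK + gK ^ 2 + gK ^ 3))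

/-- The q-trace of a one-dimensional representation, with balancing element `K⁻¹`. -/
def qTr1 (ρ : Q →ₐ[ℂ] ℂ) : Q →ₗ[ℂ] ℂ := ρ.toLinearMap ∘ₗ LinearMap.mulLeft ℂ gK

/-- The q-trace of a two-dimensional (matrix) representation, with balancing element `K⁻¹`. -/
def qTrM (ρ : Q →ₐ[ℂ] Matrix (Fin 2) (Fin 2) ℂ) : Q →ₗ[ℂ] ℂ :=
  Matrix.traceLinearMap (Fin 2) ℂ ℂ ∘ₗ ρ.toLinearMap ∘ₗ LinearMap.mulLeft ℂ gK

/-- The Drinfeld mapping `φ ↦ (φ ⊗ id)(M)`. -/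
def drinfeldImg (β : ℂ) (φ : Q →ₗ[ℂ] ℂ) : Q :=
  (TensorProduct.lid ℂ Q) (TensorProduct.map φ LinearMap.id (Mmat β))


namespace S1

open Complex

lemma KKi : gK * gKi = 1 := by
  simpa [gK, gKi] using RingQuot.mkAlgHom_rel ℂ QRel.KKi
lemma KiK : gKi * gK = 1 := by
  simpa [gK, gKi] using RingQuot.mkAlgHom_rel ℂ QRel.KiK
lemma KEKi : gK * gE * gKi = -gE := by
  simpa [gK, gKi, gE] using RingQuot.mkAlgHom_rel ℂ QRel.KEKi
lemma KFKi : gK * gF * gKi = -gF := by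
  simpa [gK, gKi, gF] using RingQuot.mkAlgHom_rel ℂ QRel.KFKi
lemma EF : gE * gF - gF * gE = (2 * I)⁻¹ • (gK - gKi) := by
  have h := RingQuot.mkAlgHom_rel ℂ QRel.EF
  rw [map_smul, map_sub, map_sub, map_mul, map_mul] at h
  exact h
lemma Esq : gE * gE = 0 := by
  have h := RingQuot.mkAlgHom_rel ℂ QRel.Esq
  rw [map_pow, map_zero, pow_two] at h
  exact h
lemma Fsq : gF * gF = 0 := by
  have h := RingQuot.mkAlgHom_rel ℂ QRel.Fsq
  rw [map_pow, map_zero, pow_two] at h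
  exact h
lemma K4 : gK ^ 4 = 1 := by
  have h := RingQuot.mkAlgHom_rel ℂ QRel.K4
  rw [map_pow, map_one] at h
  exact h

lemma Qmn (a b : Q) : a * -b = -(a * b) := mul_neg a b
lemma Qnm (a b : Q) : -a * b = -(a * b) := neg_mul a b

lemma KE : gK * gE = -(gE * gK) := by
  calc gK * gE = gK * gE * (gKi * gK) := by rw [KiK, mul_one]
    _ = (gK * gE * gKi) * gK := by simp only [mul_assoc]
    _ = _ := by rw [KEKi, Qnm]
lemma KF : gK * gF = -(gF * gK) := by
  calc gK * gF = gK * gF * (gKi * gK) := by rw [KiK, mul_one]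
    _ = (gK * gF * gKi) * gK := by simp only [mul_assoc]
    _ = _ := by rw [KFKi, Qnm]
lemma Ki_eq : gKi = gK ^ 3 := by
  calc gKi = gKi * gK ^ 4 := by rw [K4, mul_one]
    _ = (gKi * gK) * gK ^ 3 := by rw [mul_assoc, ← pow_succ']
    _ = _ := by rw [KiK, one_mul]
lemma K2E : gK ^ 2 * gE = gE * gK ^ 2 := by
  rw [pow_two, mul_assoc, KE, Qmn, ← mul_assoc, KE, Qnm, neg_neg, mul_assoc]
lemma K2F : gK ^ 2 * gF = gF * gK ^ 2 := by
  rw [pow_two, mul_assoc, KF, Qmn, ← mul_assoc, KF, Qnm, neg_neg, mul_assoc]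
lemma KiF : gKi * gF = -(gF * gKi) := by
  rw [Ki_eq, pow_succ, mul_assoc, KF, Qmn, ← mul_assoc, K2F, mul_assoc]
lemma KiE : gKi * gE = -(gE * gKi) := by
  rw [Ki_eq, pow_succ, mul_assoc, KE, Qmn, ← mul_assoc, K2E, mul_assoc]

/-- Induction principle: a subspace containing `1`, stable under left multiplication
by the generators, is everything. -/
lemma span_top (S : Submodule ℂ Q) (h1 : (1 : Q) ∈ S)
    (hE : ∀ x ∈ S, gE * x ∈ S) (hF : ∀ x ∈ S, gF * x ∈ S)
    (hK : ∀ x ∈ S, gK * x ∈ S) (q : Q) : q ∈ S := by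
  have hKi : ∀ x ∈ S, gKi * x ∈ S := by
    intro x hx
    rw [Ki_eq, pow_succ, pow_two, mul_assoc, mul_assoc]
    exact hK _ (hK _ (hK _ hx))
  obtain ⟨a, rfl⟩ := RingQuot.mkAlgHom_surjective ℂ QRel q
  suffices h : ∀ x ∈ S, RingQuot.mkAlgHom ℂ QRel a * x ∈ S by
    simpa using h 1 h1
  induction a using FreeAlgebra.induction with
  | grade0 r =>
    intro x hx
    rw [AlgHom.commutes, ← Algebra.smul_def]
    exact S.smul_mem _ hx
  | grade1 g =>
    cases g
    · exact hE
    · exact hF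
    · exact hK
    · exact hKi
  | mul a b ha hb =>
    intro x hx
    rw [map_mul, mul_assoc]
    exact ha _ (hb _ hx)
  | add a b ha hb =>
    intro x hx
    rw [map_add, add_mul]
    exact S.add_mem (ha _ hx) (hb _ hx)

lemma K2_central (x : Q) : gK ^ 2 * x = x * gK ^ 2 := by
  let S : Submodule ℂ Q :=
    LinearMap.ker (LinearMap.mulLeft ℂ (gK ^ 2) - LinearMap.mulRight ℂ (gK ^ 2))
  have hS : ∀ y, y ∈ S ↔ gK ^ 2 * y = y * gK ^ 2 := by
    intro y; simp [S, sub_eq_zero]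
  have hmul : ∀ g : Q, gK ^ 2 * g = g * gK ^ 2 → ∀ y ∈ S, g * y ∈ S := by
    intro g hg y hy
    rw [hS] at *
    rw [← mul_assoc, hg, mul_assoc, hy, mul_assoc]
  rw [← hS]
  exact span_top S (by rw [hS]; simp) (hmul _ K2E) (hmul _ K2F)
    (hmul _ (by rw [← pow_succ, ← pow_succ'])) x

lemma e0_central (x : Q) : e0 * x = x * e0 := by
  simp only [e0, smul_mul_assoc, mul_smul_comm, add_mul, mul_add, K2_central, one_mul, mul_one]
lemma e1_central (x : Q) : e1 * x = x * e1 := by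
  simp only [e1, smul_mul_assoc, mul_smul_comm, sub_mul, mul_sub, K2_central, one_mul, mul_one]

lemma K22 : gK ^ 2 * gK ^ 2 = 1 := by rw [← pow_add]; exact K4

lemma e00 : e0 * e0 = e0 := by
  simp only [e0, smul_mul_assoc, mul_smul_comm, add_mul, mul_add, K22, one_mul, mul_one]
  module
lemma e11 : e1 * e1 = e1 := by
  simp only [e1, smul_mul_assoc, mul_smul_comm, sub_mul, mul_sub, K22, one_mul, mul_one]
  module
lemma e01 : e0 * e1 = 0 := by
  simp only [e0, e1, smul_mul_assoc, mul_smul_comm, add_mul, mul_sub, K22, one_mul, mul_one]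
  module
lemma e0_add_e1 : e0 + e1 = 1 := by
  simp only [e0, e1]
  module

lemma ff : fp * fm + fm * fp = e1 := by
  have h : fp * fm + fm * fp = I • ((gE * gF - gF * gE) * gKi) := by
    simp only [fp, fm, smul_mul_assoc, mul_smul_comm, mul_assoc, KiF, sub_mul, Qmn]
    module
  have h2 : gKi * gKi = gK ^ 2 := by
    rw [Ki_eq, ← pow_add, show 3 + 3 = 4 + 2 from rfl, pow_add, K4, one_mul]
  have h3 : I * (2 * I)⁻¹ = (2 : ℂ)⁻¹ := by
    rw [mul_inv, mul_comm, mul_assoc, inv_mul_cancel₀ I_ne_zero, mul_one]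
  rw [h, EF, smul_mul_assoc, sub_mul, KKi, h2, smul_smul, h3, e1]

/-- PBW monomials. -/
def bas (i : Fin 2 × Fin 2 × Fin 4) : Q := gE ^ (i.1 : ℕ) * gF ^ (i.2.1 : ℕ) * gK ^ (i.2.2 : ℕ)

def S : Submodule ℂ Q := Submodule.span ℂ (Set.range bas)

lemma mon_mem (a b c : ℕ) : gE ^ a * gF ^ b * gK ^ c ∈ S := by
  rcases lt_or_ge a 2 with ha | ha
  · rcases lt_or_ge b 2 with hb | hb
    · have : gK ^ c = gK ^ (c % 4) := by
        conv_lhs => rw [← Nat.div_add_mod c 4, pow_add, pow_mul, K4, one_pow, one_mul]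
      rw [this]
      exact Submodule.subset_span ⟨(⟨a, ha⟩, ⟨b, hb⟩, ⟨c % 4, Nat.mod_lt _ (by norm_num)⟩), rfl⟩
    · obtain ⟨b, rfl⟩ := Nat.exists_eq_add_of_le hb
      simp [pow_add, pow_two, Fsq]
  · obtain ⟨a, rfl⟩ := Nat.exists_eq_add_of_le ha
    simp [pow_add, pow_two, Esq]

lemma stable (g : Q) (h : ∀ (a b : Fin 2) (c : ℕ), g * (gE ^ (a : ℕ) * gF ^ (b : ℕ) * gK ^ c) ∈ S) :
    ∀ x ∈ S, g * x ∈ S := by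
  intro x hx
  induction hx using Submodule.span_induction with
  | mem x hx =>
    obtain ⟨i, rfl⟩ := hx
    exact h i.1 i.2.1 i.2.2
  | zero => simp
  | add x y _ _ hx hy => rw [mul_add]; exact S.add_mem hx hy
  | smul c x _ hx => rw [mul_smul_comm]; exact S.smul_mem _ hx

lemma KEp (a : ℕ) : gK * gE ^ a = (-1 : ℂ) ^ a • (gE ^ a * gK) := by
  induction a with
  | zero => simp
  | succ n ih =>
    rw [pow_succ gE, ← mul_assoc, ih, smul_mul_assoc, mul_assoc, KE, pow_succ]
    simp only [mul_assoc, Qmn, mul_neg, mul_one, smul_neg]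
    exact (neg_smul _ _).symm
lemma KFp (a : ℕ) : gK * gF ^ a = (-1 : ℂ) ^ a • (gF ^ a * gK) := by
  induction a with
  | zero => simp
  | succ n ih =>
    rw [pow_succ gF, ← mul_assoc, ih, smul_mul_assoc, mul_assoc, KF, pow_succ]
    simp only [mul_assoc, Qmn, mul_neg, mul_one, smul_neg]
    exact (neg_smul _ _).symm

lemma stK (a b c : ℕ) : gK * (gE ^ a * gF ^ b * gK ^ c) ∈ S := by
  have : gK * (gE ^ a * gF ^ b * gK ^ c)
      = ((-1 : ℂ) ^ a * (-1) ^ b) • (gE ^ a * gF ^ b * gK ^ (c + 1)) := by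
    rw [← mul_assoc, ← mul_assoc, KEp, smul_mul_assoc, mul_assoc _ gK, KFp, mul_smul_comm,
      smul_smul, smul_mul_assoc, pow_succ' gK]
    simp only [mul_assoc]
  rw [this]
  exact S.smul_mem _ (mon_mem _ _ _)

lemma K_stable : ∀ x ∈ S, gK * x ∈ S := stable _ fun a b c => stK a b c

lemma S_top (q : Q) : q ∈ S := by
  refine span_top S (by simpa using mon_mem 0 0 0) (stable _ ?_) (stable _ ?_) K_stable q
  · intro a b c
    rw [← mul_assoc, ← mul_assoc, ← pow_succ']
    exact mon_mem _ _ _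
  · intro a b c
    have hF0 : gF * (gF ^ (b : ℕ) * gK ^ c) ∈ S := by
      rw [← mul_assoc, ← pow_succ']
      simpa using mon_mem 0 (b + 1) c
    fin_cases a
    · simpa using hF0
    · have h : gF * gE = gE * gF - (2 * I)⁻¹ • (gK - gKi) := by rw [← EF]; abel
      have hm : gF ^ (b : ℕ) * gK ^ c ∈ S := by simpa using mon_mem 0 b c
      have h2 : gF * (gE ^ 1 * gF ^ (b : ℕ) * gK ^ c) = gE ^ 1 * gF ^ ((b : ℕ) + 1) * gK ^ c
          - (2 * I)⁻¹ • (gK * (gF ^ (b : ℕ) * gK ^ c)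
            - gK * (gK * (gK * (gF ^ (b : ℕ) * gK ^ c)))) := by
        rw [pow_one, ← mul_assoc, ← mul_assoc, h, Ki_eq, pow_succ' gF]
        simp only [sub_mul, smul_mul_assoc, mul_assoc, pow_succ, pow_zero, one_mul]
      change gF * (gE ^ 1 * gF ^ (b : ℕ) * gK ^ c) ∈ S
      rw [h2]
      exact S.sub_mem (mon_mem _ _ _) (S.smul_mem _ (S.sub_mem (K_stable _ hm)
        (K_stable _ (K_stable _ (K_stable _ hm)))))

/-- Universal property. -/
def lft {A : Type} [Ring A] [Algebra ℂ A] (E F K Ki : A) (h1 : K * Ki = 1) (h2 : Ki * K = 1)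
    (h3 : K * E * Ki = -E) (h4 : K * F * Ki = -F)
    (h5 : E * F - F * E = (2 * I)⁻¹ • (K - Ki)) (h6 : E ^ 2 = 0) (h7 : F ^ 2 = 0)
    (h8 : K ^ 4 = 1) : Q →ₐ[ℂ] A :=
  RingQuot.liftAlgHom ℂ ⟨FreeAlgebra.lift ℂ (fun g => match g with
    | QGen.E => E | QGen.F => F | QGen.K => K | QGen.Kinv => Ki), by
      intro x y h
      cases h <;>
        simp only [map_mul, map_one, map_neg, map_sub, map_smul, map_pow, map_zero, ιE, ιF, ιK, ιKi,
          FreeAlgebra.lift_ι_apply] <;> assumption⟩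

section
variable {A : Type} [Ring A] [Algebra ℂ A] (E F K Ki : A) (h1 : K * Ki = 1) (h2 : Ki * K = 1)
    (h3 : K * E * Ki = -E) (h4 : K * F * Ki = -F)
    (h5 : E * F - F * E = (2 * I)⁻¹ • (K - Ki)) (h6 : E ^ 2 = 0) (h7 : F ^ 2 = 0)
    (h8 : K ^ 4 = 1)
lemma lft_E : lft E F K Ki h1 h2 h3 h4 h5 h6 h7 h8 gE = E := by simp [lft, gE, ιE]
lemma lft_F : lft E F K Ki h1 h2 h3 h4 h5 h6 h7 h8 gF = F := by simp [lft, gF, ιF]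
lemma lft_K : lft E F K Ki h1 h2 h3 h4 h5 h6 h7 h8 gK = K := by simp [lft, gK, ιK]
end

abbrev R : Type := DualNumber (DualNumber ℂ)
abbrev M2 : Type := Matrix (Fin 2) (Fin 2) ℂ
abbrev MR : Type := Matrix (Fin 2) (Fin 2) R

def x : R := TrivSqZeroExt.inl (TrivSqZeroExt.inr 1)
def y : R := TrivSqZeroExt.inr 1
lemma xx : x * x = 0 := by ext <;> simp [x]
lemma yy : y * y = 0 := by ext <;> simp [y]

def ρ0 : Q →ₐ[ℂ] MR := lft !![0, x; x, 0] !![0, y; y, 0] !![1, 0; 0, -1] !![1, 0; 0, -1]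
  (by simp [Matrix.one_fin_two])
  (by simp [Matrix.one_fin_two])
  (by simp)
  (by simp)
  (by simp [mul_comm x y])
  (by simp [pow_two, xx]; refine Matrix.ext fun i j => ?_; fin_cases i <;> fin_cases j <;> rfl)
  (by simp [pow_two, yy]; refine Matrix.ext fun i j => ?_; fin_cases i <;> fin_cases j <;> rfl)
  (by simp [pow_succ, Matrix.one_fin_two])

def ρ1 : Q →ₐ[ℂ] M2 := lft !![0, 1; 0, 0] !![0, 0; 1, 0] !![I, 0; 0, -I] !![-I, 0; 0, I]
  (by simp [Matrix.one_fin_two])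
  (by simp [Matrix.one_fin_two])
  (by refine Matrix.ext fun i j => ?_; fin_cases i <;> fin_cases j <;> simp)
  (by refine Matrix.ext fun i j => ?_; fin_cases i <;> fin_cases j <;> simp)
  (by refine Matrix.ext fun i j => ?_; fin_cases i <;> fin_cases j <;> simp <;> field_simp <;> norm_num)
  (by refine Matrix.ext fun i j => ?_; fin_cases i <;> fin_cases j <;> simp [pow_two, Matrix.mul_apply, Fin.sum_univ_two])
  (by refine Matrix.ext fun i j => ?_; fin_cases i <;> fin_cases j <;> simp [pow_two, Matrix.mul_apply, Fin.sum_univ_two])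
  (by simp [pow_succ, Matrix.one_fin_two])

def ρ2 : Q →ₐ[ℂ] M2 := lft !![0, 1; 0, 0] !![0, 0; -1, 0] !![-I, 0; 0, I] !![I, 0; 0, -I]
  (by simp [Matrix.one_fin_two])
  (by simp [Matrix.one_fin_two])
  (by refine Matrix.ext fun i j => ?_; fin_cases i <;> fin_cases j <;> simp)
  (by refine Matrix.ext fun i j => ?_; fin_cases i <;> fin_cases j <;> simp)
  (by refine Matrix.ext fun i j => ?_; fin_cases i <;> fin_cases j <;> simp <;> field_simp <;> norm_num)
  (by refine Matrix.ext fun i j => ?_; fin_cases i <;> fin_cases j <;> simp [pow_two, Matrix.mul_apply, Fin.sum_univ_two])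
  (by refine Matrix.ext fun i j => ?_; fin_cases i <;> fin_cases j <;> simp [pow_two, Matrix.mul_apply, Fin.sum_univ_two])
  (by simp [pow_succ, Matrix.one_fin_two])

lemma ρ0E : ρ0 gE = !![0, x; x, 0] := lft_E ..
lemma ρ0F : ρ0 gF = !![0, y; y, 0] := lft_F ..
lemma ρ0K : ρ0 gK = !![1, 0; 0, -1] := lft_K ..
lemma ρ1E : ρ1 gE = !![0, 1; 0, 0] := lft_E ..
lemma ρ1F : ρ1 gF = !![0, 0; 1, 0] := lft_F ..
lemma ρ1K : ρ1 gK = !![I, 0; 0, -I] := lft_K ..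
lemma ρ2E : ρ2 gE = !![0, 1; 0, 0] := lft_E ..
lemma ρ2F : ρ2 gF = !![0, 0; -1, 0] := lft_F ..
lemma ρ2K : ρ2 gK = !![-I, 0; 0, I] := lft_K ..

lemma ρ0K2 : ρ0 (gK ^ 2) = 1 := by
  rw [map_pow, ρ0K]; simp [pow_two, Matrix.one_fin_two]
lemma ρ1K2 : ρ1 (gK ^ 2) = -1 := by
  rw [map_pow, ρ1K]; simp [pow_two, Matrix.one_fin_two]
lemma ρ2K2 : ρ2 (gK ^ 2) = -1 := by
  rw [map_pow, ρ2K]; simp [pow_two, Matrix.one_fin_two]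

lemma ρ0e1 : ρ0 e1 = 0 := by rw [e1, map_smul, map_sub, ρ0K2, map_one, sub_self, smul_zero]
lemma ρ1e0 : ρ1 e0 = 0 := by rw [e0, map_smul, map_add, ρ1K2, map_one, add_neg_cancel, smul_zero]
lemma ρ2e0 : ρ2 e0 = 0 := by rw [e0, map_smul, map_add, ρ2K2, map_one, add_neg_cancel, smul_zero]
lemma ρ0e0 : ρ0 e0 = 1 := by
  have := congrArg ρ0 e0_add_e1
  rwa [map_add, ρ0e1, add_zero, map_one] at this
lemma ρ1e1 : ρ1 e1 = 1 := by
  have := congrArg ρ1 e0_add_e1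
  rwa [map_add, ρ1e0, zero_add, map_one] at this
lemma ρ2e1 : ρ2 e1 = 1 := by
  have := congrArg ρ2 e0_add_e1
  rwa [map_add, ρ2e0, zero_add, map_one] at this

lemma four {a b c d : ℂ} (h1 : a + b + c + d = 0) (h2 : a - b + c - d = 0)
    (h3 : a + b * I - c - d * I = 0) (h4 : a - b * I - c + d * I = 0) :
    a = 0 ∧ b = 0 ∧ c = 0 ∧ d = 0 := by
  have hI : I * I = -1 := I_mul_I
  refine ⟨?_, ?_, ?_, ?_⟩
  · linear_combination (h1 + h2 + h3 + h4) / 4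
  · linear_combination (h1 - h2 - I * h3 + I * h4) / 4 + (b - d) / 2 * hI
  · linear_combination (h1 + h2 - h3 - h4) / 4
  · linear_combination (h1 - h2 + I * h3 - I * h4) / 4 - (b - d) / 2 * hI

def A0 : Type := ρ0.range
instance : Ring A0 := inferInstanceAs (Ring ρ0.range)
instance : Algebra ℂ A0 := inferInstanceAs (Algebra ℂ ρ0.range)

def pr : Q →ₐ[ℂ] A0 × (M2 × M2) := AlgHom.prod ρ0.rangeRestrict (ρ1.prod ρ2)

lemma pr_surj : Function.Surjective pr := by
  rintro ⟨⟨_, q, rfl⟩, m, n⟩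
  let c : Q := gE * gF + gF * gE
  let q1 : Q := m 0 0 • (gE * gF) + m 0 1 • gE + m 1 0 • gF + m 1 1 • (gF * gE)
  let q2 : Q := -(n 0 0) • (gE * gF) + n 0 1 • gE + -(n 1 0) • gF + -(n 1 1) • (gF * gE)
  have c1 : ρ1 c = 1 := by
    simp only [c, map_add, map_mul, ρ1E, ρ1F]; simp [Matrix.one_fin_two]
  have c2 : ρ2 c = -1 := by
    simp only [c, map_add, map_mul, ρ2E, ρ2F]; simp [Matrix.one_fin_two]
  have h1 : ρ1 q1 = m := by
    simp only [q1, map_add, map_mul, map_smul, ρ1E, ρ1F]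
    refine Matrix.ext fun i j => ?_
    fin_cases i <;> fin_cases j <;> simp
  have h2 : ρ2 q2 = n := by
    simp only [q2, map_add, map_mul, map_smul, ρ2E, ρ2F]
    refine Matrix.ext fun i j => ?_
    fin_cases i <;> fin_cases j <;> simp
  refine ⟨e0 * q + e1 * ((2 : ℂ)⁻¹ • (1 + c) * q1 + (2 : ℂ)⁻¹ • (1 - c) * q2), ?_⟩
  refine Prod.ext (Subtype.ext ?_) (Prod.ext ?_ ?_)
  · change ρ0 _ = ρ0 q
    rw [map_add, map_mul, map_mul, ρ0e0, ρ0e1, one_mul, zero_mul, add_zero]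
  · change ρ1 _ = m
    rw [map_add, map_mul, map_mul, ρ1e0, ρ1e1, one_mul, zero_mul, zero_add]
    simp only [map_add, map_mul, map_smul, map_sub, map_one, c1, h1, sub_self, smul_zero, zero_mul,
      add_zero, smul_mul_assoc, add_mul, one_mul]
    module
  · change ρ2 _ = n
    rw [map_add, map_mul, map_mul, ρ2e0, ρ2e1, one_mul, zero_mul, zero_add]
    simp only [map_add, map_mul, map_smul, map_sub, map_one, c2, h2, add_neg_cancel, smul_zero,
      zero_mul, zero_add, smul_mul_assoc, sub_mul, one_mul, neg_mul]
    module

lemma E_ne : ρ0 gE ≠ 0 := by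
  rw [ρ0E]
  intro h
  have h1 : x = 0 := congrFun (congrFun h 0) 1
  have h2 := congrArg (fun t : R => TrivSqZeroExt.snd (TrivSqZeroExt.fst t)) h1
  simp [x] at h2

lemma nss : ¬ IsSemisimpleRing A0 := by
  intro h
  have hx : ∀ m : MR, ρ0 gE * m * ρ0 gE = 0 := by
    intro m
    rw [ρ0E]
    have hxm : ∀ t : R, x * t * x = 0 := by
      intro t
      have := xx
      exact (mul_right_comm x t x).trans (by rw [xx, zero_mul])
    refine Matrix.ext fun i j => ?_
    fin_cases i <;> fin_cases j <;> simp [Matrix.mul_apply, Fin.sum_univ_two, Matrix.vecMul, dotProduct, hxm]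
  let X : A0 := ρ0.rangeRestrict gE
  have hX : ∀ a : A0, X * a * X = 0 := fun a => Subtype.ext (hx a.1)
  have hJ : X ∈ Ring.jacobson A0 := by
    rw [← Ideal.jacobson_bot, Ideal.mem_jacobson_iff]
    intro a
    refine ⟨1 - a * X, ?_⟩
    have : (1 - a * X) * a * X + (1 - a * X) - 1 = - (a * (X * a * X)) := by noncomm_ring
    rw [this, hX]
    simp
  rw [IsSemisimpleRing.jacobson_eq_bot] at hJ
  have h3 : X = 0 := by simpa using hJ
  exact E_ne (congrArg Subtype.val h3)

lemma coeff_zero (c : Fin 2 × Fin 2 × Fin 4 → ℂ) (hq : pr (∑ i, c i • bas i) = 0) :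
    ∀ i, c i = 0 := by
  have h0 : ρ0 (∑ i, c i • bas i) = 0 := congrArg Subtype.val (congrArg Prod.fst hq)
  have h1 : ρ1 (∑ i, c i • bas i) = 0 := congrArg (fun t => t.2.1) hq
  have h2 : ρ2 (∑ i, c i • bas i) = 0 := congrArg (fun t => t.2.2) hq
  simp only [map_add, map_smul, bas, map_mul, map_pow, ρ0E, ρ0F, ρ0K, ρ1E, ρ1F, ρ1K, ρ2E, ρ2F, ρ2K,
    Fintype.sum_prod_type, Fin.sum_univ_two, Fin.sum_univ_four] at h0 h1 h2
  have a00 := congrFun (congrFun h1 0) 0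
  have a01 := congrFun (congrFun h1 0) 1
  have a10 := congrFun (congrFun h1 1) 0
  have a11 := congrFun (congrFun h1 1) 1
  have b00 := congrFun (congrFun h2 0) 0
  have b01 := congrFun (congrFun h2 0) 1
  have b10 := congrFun (congrFun h2 1) 0
  have b11 := congrFun (congrFun h2 1) 1
  simp [pow_succ] at a00 a01 a10 a11 b00 b01 b10 b11
  have d0 : ∀ i j, TrivSqZeroExt.fst (TrivSqZeroExt.fst (_ : R)) = 0 := fun i j =>
    congrArg (fun t : R => TrivSqZeroExt.fst (TrivSqZeroExt.fst t)) (congrFun (congrFun h0 i) j)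
  have d1 : ∀ i j, TrivSqZeroExt.snd (TrivSqZeroExt.fst (_ : R)) = 0 := fun i j =>
    congrArg (fun t : R => TrivSqZeroExt.snd (TrivSqZeroExt.fst t)) (congrFun (congrFun h0 i) j)
  have d2 : ∀ i j, TrivSqZeroExt.fst (TrivSqZeroExt.snd (_ : R)) = 0 := fun i j =>
    congrArg (fun t : R => TrivSqZeroExt.fst (TrivSqZeroExt.snd t)) (congrFun (congrFun h0 i) j)
  have d3 : ∀ i j, TrivSqZeroExt.snd (TrivSqZeroExt.snd (_ : R)) = 0 := fun i j =>
    congrArg (fun t : R => TrivSqZeroExt.snd (TrivSqZeroExt.snd t)) (congrFun (congrFun h0 i) j)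
  have p00 := d0 0 0
  have p11 := d0 1 1
  have q01 := d1 0 1
  have q10 := d1 1 0
  have r01 := d2 0 1
  have r10 := d2 1 0
  have s00 := d3 0 0
  have s11 := d3 1 1
  clear d0 d1 d2 d3
  simp [pow_succ, x, y] at p00 p11 q01 q10 r01 r10 s00 s11
  clear hq h0 h1 h2
  obtain ⟨u0, u1, u2, u3⟩ := four (a := c (0, 0, 0)) (b := c (0, 0, 1)) (c := c (0, 0, 2))
    (d := c (0, 0, 3)) (by linear_combination p00) (by linear_combination p11)
    (by linear_combination b11) (by linear_combination a11)
  obtain ⟨v0, v1, v2, v3⟩ := four (a := c (0, 1, 0)) (b := c (0, 1, 1)) (c := c (0, 1, 2))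
    (d := c (0, 1, 3)) (by linear_combination r10) (by linear_combination r01)
    (by linear_combination a10) (by linear_combination -b10)
  obtain ⟨w0, w1, w2, w3⟩ := four (a := c (1, 0, 0)) (b := c (1, 0, 1)) (c := c (1, 0, 2))
    (d := c (1, 0, 3)) (by linear_combination q10) (by linear_combination q01)
    (by linear_combination b01) (by linear_combination a01)
  obtain ⟨z0, z1, z2, z3⟩ := four (a := c (1, 1, 0)) (b := c (1, 1, 1)) (c := c (1, 1, 2))
    (d := c (1, 1, 3)) (by linear_combination s00) (by linear_combination s11)
    (by linear_combination a00 - b11) (by linear_combination a11 - b00)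
  rintro ⟨a, b, k⟩
  fin_cases a <;> fin_cases b <;> fin_cases k <;> assumption

lemma pr_inj : Function.Injective pr := by
  rw [injective_iff_map_eq_zero]
  intro q hq
  obtain ⟨c, rfl⟩ := (Submodule.mem_span_range_iff_exists_fun ℂ).1 (S_top q)
  exact Finset.sum_eq_zero fun i _ => by rw [coeff_zero c hq i, zero_smul]

lemma bas_li : LinearIndependent ℂ bas :=
  Fintype.linearIndependent_iff.2 fun c hc => coeff_zero c (by rw [hc, map_zero])

lemma fr : Module.finrank ℂ A0 = 8 := by
  have hQ : Module.finrank ℂ Q = 16 := by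
    rw [Module.finrank_eq_card_basis (Module.Basis.mk bas_li fun q _ => S_top q)]
    rfl
  have e : Q ≃ₐ[ℂ] A0 × (M2 × M2) := AlgEquiv.ofBijective pr ⟨pr_inj, pr_surj⟩
  have hf : Module.Finite ℂ Q := Module.finite_of_finrank_pos (by rw [hQ]; norm_num)
  have h1 := e.toLinearEquiv.finrank_eq
  have h2 : Module.Finite ℂ (A0 × (M2 × M2)) := Module.Finite.equiv e.toLinearEquiv
  have h3 : Module.Finite ℂ A0 :=
    Module.Finite.of_surjective (LinearMap.fst ℂ A0 (M2 × M2)) LinearMap.fst_surjective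
  rw [hQ, Module.finrank_prod, Module.finrank_prod, Module.finrank_matrix] at h1
  simp at h1
  omega

end S1

/-- the central orthogonal idempotents `e₀, e₁`, the fermionic generators
`f± = −iF, EK⁻¹`, and the algebra decomposition `Q = Q₀ ⊕ Q₁` with
`Q₁ ≅ M₂(ℂ) × M₂(ℂ)` semisimple and `Q₀` eight-dimensional non-semisimple. -/
theorem statement1 (Δ : Q →ₐ[ℂ] TP2 ℂ Q)
    (hΔE : Δ gE = (1:Q) ⊗ₜ[ℂ] gE + gE ⊗ₜ[ℂ] gK)
    (hΔF : Δ gF = gKi ⊗ₜ[ℂ] gF + gF ⊗ₜ[ℂ] (1:Q))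
    (hΔK : Δ gK = gK ⊗ₜ[ℂ] gK) :
    e0 * e0 = e0 ∧ e1 * e1 = e1 ∧ e0 * e1 = 0 ∧ e1 * e0 = 0 ∧ e0 + e1 = 1 ∧
    (∀ x : Q, e0 * x = x * e0) ∧ (∀ x : Q, e1 * x = x * e1) ∧
    fp * fm + fm * fp = e1 ∧
    Δ fp = fp ⊗ₜ[ℂ] (1:Q) + gKi ⊗ₜ[ℂ] fp ∧
    Δ fm = fm ⊗ₜ[ℂ] (1:Q) + gKi ⊗ₜ[ℂ] fm ∧
    ∃ (A₀ : Type) (_ : Ring A₀) (_ : Algebra ℂ A₀)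
      (ψ : Q ≃ₐ[ℂ] A₀ × (Matrix (Fin 2) (Fin 2) ℂ × Matrix (Fin 2) (Fin 2) ℂ)),
      Module.finrank ℂ A₀ = 8 ∧ ¬ IsSemisimpleRing A₀ ∧
      ψ e0 = (1, 0) ∧ ψ e1 = (0, 1) := by
  refine ⟨S1.e00, S1.e11, S1.e01, by rw [← S1.e0_central, S1.e01], S1.e0_add_e1, S1.e0_central,
    S1.e1_central, S1.ff, ?_, ?_, S1.A0, inferInstance, inferInstance,
    AlgEquiv.ofBijective S1.pr ⟨S1.pr_inj, S1.pr_surj⟩, S1.fr, S1.nss, ?_, ?_⟩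
  · rw [fp, map_smul, hΔF, smul_add, ← TensorProduct.smul_tmul', TensorProduct.tmul_smul, add_comm]
  · have hKi : Δ gKi = gKi ⊗ₜ[ℂ] gKi := by
      rw [S1.Ki_eq, map_pow, hΔK, Algebra.TensorProduct.tmul_pow]
    rw [fm, map_mul, hΔE, hKi, add_mul, Algebra.TensorProduct.tmul_mul_tmul,
      Algebra.TensorProduct.tmul_mul_tmul, S1.KKi, one_mul, add_comm]
  · exact Prod.ext (Subtype.ext S1.ρ0e0) (Prod.ext S1.ρ1e0 S1.ρ2e0)
  · exact Prod.ext (Subtype.ext S1.ρ0e1) (Prod.ext S1.ρ1e1 S1.ρ2e1)
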